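/- (Entanglement-assisted repetition codes, even length.) For every even integer n ≥ 2, there exists an F₂-subspace S ⊆ V_n with dim S = 2(n−1) and S ∩ S^⊥ = {0} such that the minimum Pauli weight of a nonzero element of S^⊥ equals n−1; that is, a maximal-entanglement [[n,1,n−1;n−1]] EAQEC code exists. -/

import Mathlib

open Finset

/-- The binary symplectic space modelling `n`-qubit Pauli operators modulo phases. -/
abbrev V (n : ℕ) := (Fin n → ZMod 2) × (Fin n → ZMod 2)

/-- The Pauli weight of `v = (x, z)`: the number of indices where `(x i, z i) ≠ (0,0)`. -/
def wt {n : ℕ} (v : V n) : ℕ :=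
  (Finset.univ.filter fun i => ¬(v.1 i = 0 ∧ v.2 i = 0)).card

/-- The binary symplectic product. -/
def sympl {n : ℕ} (u v : V n) : ZMod 2 :=
  ∑ i, (u.1 i * v.2 i + u.2 i * v.1 i)

lemma sympl_add_left {n : ℕ} (a b w : V n) :
    sympl (a + b) w = sympl a w + sympl b w := by
  simp only [sympl, Prod.fst_add, Prod.snd_add, Pi.add_apply, ← Finset.sum_add_distrib]
  exact Finset.sum_congr rfl fun i _ => by ring

lemma sympl_smul_left {n : ℕ} (c : ZMod 2) (a w : V n) :
    sympl (c • a) w = c * sympl a w := by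
  simp only [sympl, Prod.smul_fst, Prod.smul_snd, Pi.smul_apply, smul_eq_mul,
    Finset.mul_sum]
  exact Finset.sum_congr rfl fun i _ => by ring

/-- The symplectic dual `W^⊥` of a subspace `W ⊆ V n`. -/
def sdual {n : ℕ} (W : Submodule (ZMod 2) (V n)) : Submodule (ZMod 2) (V n) where
  carrier := {u | ∀ w ∈ W, sympl u w = 0}
  add_mem' := fun ha hb w hw => by
    rw [sympl_add_left, ha w hw, hb w hw, add_zero]
  zero_mem' := fun w hw => by simp [sympl]
  smul_mem' := fun c a ha w hw => by rw [sympl_smul_left, ha w hw, mul_zero]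

open scoped Classical

/-!
Take `S = L^⊥` for a two-dimensional `L = {0, a, b, a + b}` with `sympl a b = 1`. The symplectic
form is alternating, so its restriction to `L` is nondegenerate; this gives `S ⊓ S^⊥ = ⊥`, and
`S^⊥ = L` by double duality. It remains to choose the logical operators: `a = X ⊗ ⋯ ⊗ X` and `b`
acting as `Z` on all qubits but one anticommute at `n - 1` sites, an odd number precisely because
`n` is even, while `a`, `b` and `a + b` have weights `n`, `n - 1` and `n`.
-/

open Module Submodule

section AlternatingForm

variable {R M : Type*} [CommRing R] [NoZeroDivisors R] [AddCommGroup M] [Module R M]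
  {B : LinearMap.BilinForm R M} {a b : M}

lemma linearIndependent_pair_of_isAlt (hB : B.IsAlt) (hab : B a b ≠ 0) :
    LinearIndependent R ![a, b] := by
  refine LinearIndependent.pair_iff.2 fun p q h => ?_
  have hp : B (p • a + q • b) b = 0 := by rw [h, LinearMap.BilinForm.zero_left]
  have hq : B a (p • a + q • b) = 0 := by rw [h, LinearMap.BilinForm.zero_right]
  constructor
  · simpa [hB.self_eq_zero, hab] using hp
  · simpa [hB.self_eq_zero, hab] using hq

lemma disjoint_span_pair_orthogonal_of_isAlt (hB : B.IsAlt) (hab : B a b ≠ 0) :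
    Disjoint (span R {a, b}) (B.orthogonal (span R {a, b})) := by
  refine Submodule.disjoint_def.2 fun v hv hortho => ?_
  obtain ⟨p, q, rfl⟩ := mem_span_pair.1 hv
  have hq : B a (p • a + q • b) = 0 := hortho a (mem_span_of_mem (by simp))
  have hp : B (p • a + q • b) b = 0 := hB.isRefl _ _ (hortho b (mem_span_of_mem (by simp)))
  obtain rfl : q = 0 := by simpa [hB.self_eq_zero, hab] using hq
  obtain rfl : p = 0 := by simpa [hab] using hp
  simp

end AlternatingForm

lemma mem_span_pair_zmod_two {M : Type*} [AddCommGroup M] [Module (ZMod 2) M] {a b v : M} :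
    v ∈ span (ZMod 2) {a, b} ↔ v = 0 ∨ v = a ∨ v = b ∨ v = a + b := by
  have exists_zmod_two (P : ZMod 2 → Prop) : (∃ c, P c) ↔ P 0 ∨ P 1 := Fin.exists_fin_two
  simp only [mem_span_pair, exists_zmod_two, zero_smul, one_smul, zero_add, add_zero,
    eq_comm (b := v)]
  tauto

section SymplecticDual

variable {n : ℕ}

lemma sympl_comm (u v : V n) : sympl u v = sympl v u :=
  Finset.sum_congr rfl fun _ _ => by ring

/-- The symplectic product as a bilinear form, giving access to Mathlib's duality theory. -/
def symplForm (n : ℕ) : LinearMap.BilinForm (ZMod 2) (V n) :=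
  LinearMap.mk₂ (ZMod 2) sympl sympl_add_left sympl_smul_left
    (fun u v w => by simp only [sympl_comm u, sympl_add_left])
    (fun c u v => by simp only [sympl_comm u, sympl_smul_left, smul_eq_mul])

lemma symplForm_apply (u v : V n) : symplForm n u v = sympl u v := rfl

lemma symplForm_isAlt : (symplForm n).IsAlt := fun u => by
  rw [symplForm_apply, sympl]
  exact Finset.sum_eq_zero fun i _ => by rw [mul_comm (u.2 i), CharTwo.add_self_eq_zero]

lemma symplForm_nondegenerate : (symplForm n).Nondegenerate := by
  refine symplForm_isAlt.isRefl.nondegenerate_iff_separatingLeft.2 fun v hv => ?_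
  ext i
  · simpa [symplForm_apply, sympl, Pi.single_apply] using hv (0, Pi.single i 1)
  · simpa [symplForm_apply, sympl, Pi.single_apply] using hv (Pi.single i 1, 0)

lemma sdual_eq_orthogonal (W : Submodule (ZMod 2) (V n)) :
    sdual W = (symplForm n).orthogonal W :=
  Submodule.ext fun u => forall₂_congr fun w _ => by rw [symplForm_apply, sympl_comm]

lemma sdual_sdual (W : Submodule (ZMod 2) (V n)) : sdual (sdual W) = W := by
  simp only [sdual_eq_orthogonal]
  exact LinearMap.BilinForm.orthogonal_orthogonal symplForm_nondegenerate
    symplForm_isAlt.isRefl W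

lemma finrank_sdual (W : Submodule (ZMod 2) (V n)) :
    finrank (ZMod 2) (sdual W) = 2 * n - finrank (ZMod 2) W := by
  rw [sdual_eq_orthogonal, LinearMap.BilinForm.finrank_orthogonal symplForm_nondegenerate,
    finrank_prod, finrank_fin_fun, two_mul]

variable {a b : V n}

lemma finrank_sdual_span_pair (hab : sympl a b = 1) :
    finrank (ZMod 2) (sdual (span (ZMod 2) {a, b})) = 2 * (n - 1) := by
  have hli : LinearIndependent (ZMod 2) ![a, b] :=
    linearIndependent_pair_of_isAlt symplForm_isAlt (by simp [symplForm_apply, hab])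
  have hrank : finrank (ZMod 2) (span (ZMod 2) {a, b}) = 2 := by
    rw [← Matrix.range_cons_cons_empty a b ![], finrank_span_eq_card hli, Fintype.card_fin]
  rw [finrank_sdual, hrank, Nat.mul_sub_one]

lemma disjoint_span_pair_sdual (hab : sympl a b = 1) :
    Disjoint (span (ZMod 2) {a, b}) (sdual (span (ZMod 2) {a, b})) := by
  rw [sdual_eq_orthogonal]
  exact disjoint_span_pair_orthogonal_of_isAlt symplForm_isAlt (by simp [symplForm_apply, hab])

end SymplecticDual

section PauliString

variable {n : ℕ}

/-- The Pauli operator acting as `X` on `s \ t`, as `Z` on `t \ s`, as `Y` on `s ∩ t` and trivially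
elsewhere. -/
def pauliString (s t : Finset (Fin n)) : V n :=
  (fun i => if i ∈ s then 1 else 0, fun i => if i ∈ t then 1 else 0)

lemma wt_pauliString (s t : Finset (Fin n)) : wt (pauliString s t) = (s ∪ t).card := by
  rw [wt]
  congr 1
  ext i
  simp [pauliString, or_iff_not_imp_left]

lemma sympl_pauliString (s t s' t' : Finset (Fin n)) :
    sympl (pauliString s t) (pauliString s' t') = (s ∩ t').card + (t ∩ s').card := by
  simp [sympl, pauliString, Finset.sum_add_distrib, ← ite_and, ← Finset.mem_inter,
    Finset.inter_comm]

lemma pauliString_empty_right_add_empty_left (s t : Finset (Fin n)) :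
    pauliString s ∅ + pauliString ∅ t = pauliString s t := by
  ext <;> simp [pauliString]

end PauliString

/-- For every even `n ≥ 2` a maximal-entanglement `[[n,1,n−1;n−1]]`
entanglement-assisted repetition code exists. -/
theorem EA_repetition_code_even (n : ℕ) (hn : 2 ≤ n) (heven : Even n) :
    ∃ S : Submodule (ZMod 2) (V n),
      Module.finrank (ZMod 2) S = 2 * (n - 1) ∧
      S ⊓ sdual S = ⊥ ∧
      (∀ v ∈ sdual S, v ≠ 0 → n - 1 ≤ wt v) ∧
      (∃ v ∈ sdual S, v ≠ 0 ∧ wt v = n - 1) := by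
  let i : Fin n := ⟨0, by omega⟩
  let a : V n := pauliString univ ∅
  let b : V n := pauliString ∅ {i}ᶜ
  have hadd : a + b = pauliString univ {i}ᶜ := pauliString_empty_right_add_empty_left _ _
  have wt_a : wt a = n := by simp [a, wt_pauliString]
  have wt_b : wt b = n - 1 := by simp [b, wt_pauliString, card_compl]
  have wt_add : wt (a + b) = n := by simp [hadd, wt_pauliString, union_eq_left.2]
  have hab : sympl a b = 1 := by
    have hodd : Odd (n - 1) := Nat.Even.sub_odd (by omega) heven odd_one
    simpa [a, b, sympl_pauliString, card_compl] using ZMod.natCast_eq_one_iff_odd.2 hodd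
  refine ⟨sdual (span (ZMod 2) {a, b}), finrank_sdual_span_pair hab, ?_⟩
  rw [sdual_sdual, inf_comm]
  refine ⟨(disjoint_span_pair_sdual hab).eq_bot, fun v hv hv0 => ?_, b, ?_, ?_, wt_b⟩
  · obtain rfl | rfl | rfl | rfl := mem_span_pair_zmod_two.1 hv
    · exact absurd rfl hv0
    all_goals omega
  · exact mem_span_of_mem (by simp)
  · intro hb
    simp [hb, sympl] at hab
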